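/- Let α ∈ ℂ∖ℤ and let V be a weight module over Ū all of whose H-eigenvalues lie in the coset α + 2ℤ. Then V is isomorphic to a finite direct sum of simple weight modules (in fact of simple Verma modules). -/

import Mathlib

noncomputable section

open scoped TensorProduct

namespace Unrolled

/-- `q^z = exp(π √-1 z / r)`. -/
def qc (r : ℕ) (z : ℂ) : ℂ := Complex.exp (Real.pi * Complex.I * z / r)

/-- `{z} = q^z - q^{-z}`. -/
def qbrk (r : ℕ) (z : ℂ) : ℂ := qc r z - qc r (-z)

/-- `[z] = {z}/{1}`. -/
def qint (r : ℕ) (z : ℂ) : ℂ := qbrk r z / qbrk r 1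

/-- `{n}! = ∏_{i=1}^n {i}`. -/
def qbrkFact (r n : ℕ) : ℂ := ∏ i ∈ Finset.range n, qbrk r ((i : ℂ) + 1)

/-- `[n]! = ∏_{i=1}^n [i]`. -/
def qintFact (r n : ℕ) : ℂ := ∏ i ∈ Finset.range n, qint r ((i : ℂ) + 1)

/-- The data of five operators `K, K⁻¹, H, E, F` on a complex vector space. -/
structure Ops (V : Type) [AddCommGroup V] [Module ℂ V] where
  K : Module.End ℂ V
  Kinv : Module.End ℂ V
  H : Module.End ℂ V
  E : Module.End ℂ V
  F : Module.End ℂ V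

/-- A module over the restricted unrolled quantum group `Ū = Ū_q^H(sl₂(ℂ))`:
five operators satisfying the defining relations of `Ū`. -/
structure Rep (r : ℕ) (V : Type) [AddCommGroup V] [Module ℂ V] extends Ops V where
  rel_KKinv : K * Kinv = 1
  rel_KinvK : Kinv * K = 1
  rel_HK : H * K = K * H
  rel_HE : H * E - E * H = (2 : ℂ) • E
  rel_HF : H * F - F * H = (-2 : ℂ) • F
  rel_KE : K * E = qc r 2 • (E * K)
  rel_KF : K * F = qc r (-2) • (F * K)
  rel_EF : E * F - F * E = (qbrk r 1)⁻¹ • (K - Kinv)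
  rel_Er : E ^ r = 0
  rel_Fr : F ^ r = 0

variable {V W U : Type} [AddCommGroup V] [Module ℂ V] [AddCommGroup W] [Module ℂ W]
  [AddCommGroup U] [Module ℂ U]

/-- A `Ū`-submodule: a subspace invariant under the five operators. -/
def Ops.Invariant (A : Ops V) (p : Submodule ℂ V) : Prop :=
  (∀ v ∈ p, A.K v ∈ p) ∧ (∀ v ∈ p, A.Kinv v ∈ p) ∧ (∀ v ∈ p, A.H v ∈ p) ∧
    (∀ v ∈ p, A.E v ∈ p) ∧ (∀ v ∈ p, A.F v ∈ p)

/-- A simple `Ū`-module: nonzero, with no nonzero proper invariant subspace. -/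
def Ops.IsSimple (A : Ops V) : Prop :=
  (∃ v : V, v ≠ 0) ∧ ∀ p : Submodule ℂ V, A.Invariant p → p = ⊥ ∨ p = ⊤

/-- A weight module: finite dimensional, a direct sum of `H`-eigenspaces, on which `K`
acts by `q^μ` on the `H`-eigenspace of eigenvalue `μ`. -/
structure IsWeight (r : ℕ) {V : Type} [AddCommGroup V] [Module ℂ V] (A : Ops V) : Prop where
  finDim : FiniteDimensional ℂ V
  sup_eigenspaces : (⨆ μ : ℂ, Module.End.eigenspace A.H μ) = ⊤
  K_apply : ∀ (μ : ℂ), ∀ v ∈ Module.End.eigenspace A.H μ, A.K v = qc r μ • v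

/-- A `Ū`-linear map. -/
def IsEquivariant (A : Ops V) (B : Ops W) (f : V →ₗ[ℂ] W) : Prop :=
  (∀ v, f (A.K v) = B.K (f v)) ∧ (∀ v, f (A.Kinv v) = B.Kinv (f v)) ∧
    (∀ v, f (A.H v) = B.H (f v)) ∧ (∀ v, f (A.E v) = B.E (f v)) ∧
    (∀ v, f (A.F v) = B.F (f v))

/-- Isomorphism of `Ū`-modules. -/
def OpsIso (A : Ops V) (B : Ops W) : Prop :=
  ∃ e : V ≃ₗ[ℂ] W, IsEquivariant A B (e : V →ₗ[ℂ] W)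

/-- The weight `α + r - 1 - 2i` of the basis vector `v_i` of the Verma module `V_α`. -/
def wt (r : ℕ) (α : ℂ) (i : ℕ) : ℂ := α + r - 1 - 2 * i

/-- The coefficient `{i}{i-α}/{1}²` occurring in `E v_i`. -/
def cE (r : ℕ) (α : ℂ) (i : ℕ) : ℂ := qbrk r i * qbrk r ((i : ℂ) - α) / qbrk r 1 ^ 2

/-- The Verma module `V_α` of highest weight `α + r - 1`, realized on `Fin r → ℂ`
with basis `v_0, …, v_{r-1}`. -/
def vermaOps (r : ℕ) (α : ℂ) : Ops (Fin r → ℂ) where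
  K := (Matrix.diagonal fun i : Fin r => qc r (wt r α (i : ℕ))).mulVecLin
  Kinv := (Matrix.diagonal fun i : Fin r => qc r (-wt r α (i : ℕ))).mulVecLin
  H := (Matrix.diagonal fun i : Fin r => wt r α (i : ℕ)).mulVecLin
  E := (Matrix.of fun i j : Fin r =>
    if (j : ℕ) = (i : ℕ) + 1 then cE r α (j : ℕ) else 0).mulVecLin
  F := (Matrix.of fun i j : Fin r =>
    if (i : ℕ) = (j : ℕ) + 1 then (1 : ℂ) else 0).mulVecLin

/-- `α_{l,n} = (l-1)r + n + 1`, so that `S_n^{lr}` is a quotient of `V_{α_{l,n}}`. -/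
def aln (r : ℕ) (l : ℤ) (n : ℕ) : ℂ := ((l : ℂ) - 1) * r + n + 1

/-- The simple module `S_n^{lr}` of highest weight `lr + n` and dimension `n+1`,
realized on `Fin (n+1) → ℂ`. -/
def smodOps (r : ℕ) (l : ℤ) (n : ℕ) : Ops (Fin (n + 1) → ℂ) where
  K := (Matrix.diagonal fun i : Fin (n + 1) => qc r (wt r (aln r l n) (i : ℕ))).mulVecLin
  Kinv := (Matrix.diagonal fun i : Fin (n + 1) => qc r (-wt r (aln r l n) (i : ℕ))).mulVecLin
  H := (Matrix.diagonal fun i : Fin (n + 1) => wt r (aln r l n) (i : ℕ)).mulVecLin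
  E := (Matrix.of fun i j : Fin (n + 1) =>
    if (j : ℕ) = (i : ℕ) + 1 then cE r (aln r l n) (j : ℕ) else 0).mulVecLin
  F := (Matrix.of fun i j : Fin (n + 1) =>
    if (i : ℕ) = (j : ℕ) + 1 then (1 : ℂ) else 0).mulVecLin

/-- `α ∈ (ℂ∖ℤ) ∪ rℤ`. -/
def goodα (r : ℕ) (α : ℂ) : Prop := (¬∃ n : ℤ, α = (n : ℂ)) ∨ ∃ m : ℤ, α = (r : ℂ) * m

/-- The direct sum `Ū`-module structure on a product. -/
def piOps {ι : Type} {Vf : ι → Type} [∀ i, AddCommGroup (Vf i)] [∀ i, Module ℂ (Vf i)]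
    (A : ∀ i, Ops (Vf i)) : Ops (∀ i, Vf i) where
  K := LinearMap.pi fun i => (A i).K ∘ₗ LinearMap.proj i
  Kinv := LinearMap.pi fun i => (A i).Kinv ∘ₗ LinearMap.proj i
  H := LinearMap.pi fun i => (A i).H ∘ₗ LinearMap.proj i
  E := LinearMap.pi fun i => (A i).E ∘ₗ LinearMap.proj i
  F := LinearMap.pi fun i => (A i).F ∘ₗ LinearMap.proj i

/-!
The kernel of `E` has a basis of highest weight vectors, and each such vector `w` defines a map
`v_i ↦ F ^ i w` from a Verma module. The sum of these maps is injective: its kernel is stable under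
the nilpotent operator `E`, so it is enough to look at the vectors killed by `E`; as no coefficient
`{i}{i-β}/{1}²` with `0 < i < r` vanishes, these are combinations of the generators `v_0`, which
are sent to the basis of `ker E`. The sum is onto by a dimension count, since `E ^ r = 0` forces
`dim V ≤ r * dim (ker E)`.
-/

section LinearAlgebra

variable {k M N : Type*}

lemma eq_bot_of_disjoint_ker_of_isNilpotent [Ring k] [AddCommGroup M] [Module k M]
    {T : Module.End k M} (hT : IsNilpotent T) {p : Submodule k M} (hp : ∀ v ∈ p, T v ∈ p)
    (hker : Disjoint p (LinearMap.ker T)) : p = ⊥ := by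
  obtain ⟨n, hn⟩ := hT
  have eq_zero_of_pow (n : ℕ) : ∀ v ∈ p, (T ^ n) v = 0 → v = 0 := by
    induction n with
    | zero => exact fun _ _ hv => hv
    | succ n ih =>
      exact fun v hv hTv => Submodule.disjoint_def.1 hker v hv
        (ih (T v) (hp v hv) (by rwa [pow_succ] at hTv))
  exact (Submodule.eq_bot_iff p).2 fun v hv => eq_zero_of_pow n v hv (by simp [hn])

lemma finrank_comap_le [DivisionRing k] [AddCommGroup M] [Module k M] [AddCommGroup N]
    [Module k N] [FiniteDimensional k M] [FiniteDimensional k N] (f : M →ₗ[k] N)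
    (p : Submodule k N) :
    Module.finrank k (p.comap f) ≤ Module.finrank k p + Module.finrank k (LinearMap.ker f) := by
  let g : p.comap f →ₗ[k] p := f.restrict fun _ hx => hx
  have hker : (LinearMap.ker g).map (p.comap f).subtype ≤ LinearMap.ker f := by
    rintro _ ⟨x, hx, rfl⟩
    exact congrArg Subtype.val hx
  calc Module.finrank k (p.comap f)
      = Module.finrank k (LinearMap.range g) + Module.finrank k (LinearMap.ker g) :=
        (LinearMap.finrank_range_add_finrank_ker g).symm
    _ ≤ Module.finrank k p + Module.finrank k (LinearMap.ker f) := by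
        refine add_le_add (Submodule.finrank_le _) ?_
        rw [← Submodule.finrank_map_subtype_eq]
        exact Submodule.finrank_mono hker

lemma finrank_ker_pow_le [DivisionRing k] [AddCommGroup M] [Module k M]
    [FiniteDimensional k M] (T : Module.End k M) (n : ℕ) :
    Module.finrank k (LinearMap.ker (T ^ n)) ≤ n * Module.finrank k (LinearMap.ker T) := by
  induction n with
  | zero => simp [Module.End.one_eq_id, LinearMap.ker_id]
  | succ n ih =>
    rw [pow_succ, Module.End.mul_eq_comp, LinearMap.ker_comp, add_mul, one_mul]
    exact (finrank_comap_le T _).trans (by gcongr)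

lemma exists_basis_eigenvectors [Field k] [AddCommGroup M] [Module k M]
    [FiniteDimensional k M] {T : Module.End k M} (hT : ⨆ μ, T.eigenspace μ = ⊤) :
    ∃ (b : Module.Basis (Fin (Module.finrank k M)) k M) (μ : Fin (Module.finrank k M) → k),
      ∀ i, T (b i) = μ i • b i := by
  let eigenvectors : Set M := {v | ∃ μ : k, T v = μ • v}
  have hspan : ⊤ ≤ Submodule.span k eigenvectors :=
    hT.ge.trans <| iSup_le fun μ _ hv =>
      Submodule.subset_span ⟨μ, Module.End.mem_eigenspace_iff.1 hv⟩
  let b := Module.Basis.ofSpan hspan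
  let e := b.indexEquiv (Module.finBasis k M)
  have heigen i : b.reindex e i ∈ eigenvectors := by
    rw [Module.Basis.reindex_apply]
    exact Module.Basis.ofSpan_subset hspan (Set.mem_range_self _)
  choose μ hμ using heigen
  exact ⟨b.reindex e, μ, hμ⟩

end LinearAlgebra

section QuantumNumbers

variable {r : ℕ}

lemma qc_add (r : ℕ) (z w : ℂ) : qc r (z + w) = qc r z * qc r w := by
  simp only [qc, mul_add, add_div, Complex.exp_add]

lemma qc_neg (r : ℕ) (z : ℂ) : qc r (-z) = (qc r z)⁻¹ := by
  simp only [qc, mul_neg, neg_div, Complex.exp_neg]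

lemma qc_ne_zero (r : ℕ) (z : ℂ) : qc r z ≠ 0 := Complex.exp_ne_zero _

lemma qc_self (r : ℕ) [NeZero r] : qc r r = -1 := by
  rw [qc, mul_div_cancel_right₀ _ (NeZero.ne (r : ℂ)), Complex.exp_pi_mul_I]

lemma qbrk_eq_zero_iff [NeZero r] {z : ℂ} : qbrk r z = 0 ↔ ∃ n : ℤ, z = r * n := by
  have hr : (r : ℂ) ≠ 0 := NeZero.ne _
  have hπ : (Real.pi : ℂ) ≠ 0 := by exact_mod_cast Real.pi_ne_zero
  have hI := Complex.I_ne_zero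
  rw [qbrk, sub_eq_zero, qc, qc, Complex.exp_eq_exp_iff_exists_int]
  refine exists_congr fun n => ?_
  field_simp
  constructor <;> intro h
  · linear_combination h / 2
  · linear_combination 2 * h

lemma qbrk_natCast_ne_zero {i : ℕ} (hi : 0 < i) (hir : i < r) : qbrk r i ≠ 0 := by
  have : NeZero r := ⟨by omega⟩
  rw [Ne, qbrk_eq_zero_iff]
  rintro ⟨n, hn⟩
  have hdvd : (r : ℤ) ∣ i := ⟨n, by exact_mod_cast hn⟩
  exact Nat.not_dvd_of_pos_of_lt hi hir (Int.natCast_dvd_natCast.1 hdvd)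

lemma qbrk_one_ne_zero (hr : 2 ≤ r) : qbrk r 1 ≠ 0 := by
  exact_mod_cast qbrk_natCast_ne_zero one_pos hr

lemma goodα.qbrk_natCast_sub_ne_zero {β : ℂ} (hβ : goodα r β) {i : ℕ} (hi : 0 < i)
    (hir : i < r) : qbrk r (i - β) ≠ 0 := by
  have : NeZero r := ⟨by omega⟩
  intro h
  obtain ⟨n, hn⟩ := qbrk_eq_zero_iff.1 h
  rcases hβ with hβ | ⟨m, rfl⟩
  · exact hβ ⟨i - r * n, by push_cast; linear_combination -hn⟩
  · refine qbrk_natCast_ne_zero hi hir (qbrk_eq_zero_iff.2 ⟨n + m, ?_⟩)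
    push_cast
    linear_combination hn

lemma goodα.cE_ne_zero {β : ℂ} (hβ : goodα r β) {i : ℕ} (hi : 0 < i) (hir : i < r) :
    cE r β i ≠ 0 :=
  div_ne_zero (mul_ne_zero (qbrk_natCast_ne_zero hi hir) (hβ.qbrk_natCast_sub_ne_zero hi hir))
    (pow_ne_zero 2 (qbrk_one_ne_zero (by omega)))

lemma cE_zero (r : ℕ) (β : ℂ) : cE r β 0 = 0 := by simp [cE, qbrk]

lemma qbrk_add_one_mul_qbrk_add_one_sub [NeZero r] (β : ℂ) (i : ℕ) :
    qbrk r (i + 1) * qbrk r (i + 1 - β) =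
      qbrk r i * qbrk r (i - β) + qbrk r 1 * qbrk r (wt r β i) := by
  have hi := qc_ne_zero r i
  have h1 := qc_ne_zero r 1
  have hβ := qc_ne_zero r β
  have hwt : wt r β i = β + r + -1 + -i + -i := by rw [wt]; ring
  simp only [hwt, qbrk, sub_eq_add_neg, qc_neg, qc_add, qc_self]
  field_simp
  ring

lemma cE_succ (hr : 2 ≤ r) (β : ℂ) (i : ℕ) :
    cE r β (i + 1) = cE r β i + (qbrk r 1)⁻¹ * qbrk r (wt r β i) := by
  have : NeZero r := ⟨by omega⟩
  have h1 := qbrk_one_ne_zero hr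
  rw [cE, Nat.cast_succ, qbrk_add_one_mul_qbrk_add_one_sub, cE]
  field_simp

end QuantumNumbers

section Equivariant

lemma IsEquivariant.symm {A : Ops V} {B : Ops W} {e : V ≃ₗ[ℂ] W}
    (he : IsEquivariant A B (e : V →ₗ[ℂ] W)) :
    IsEquivariant B A (e.symm : W →ₗ[ℂ] V) := by
  have intertwines_symm {S : Module.End ℂ V} {T : Module.End ℂ W} (h : ∀ v, e (S v) = T (e v))
      (w : W) : e.symm (T w) = S (e.symm w) := by
    rw [LinearEquiv.symm_apply_eq, h, LinearEquiv.apply_symm_apply]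
  obtain ⟨hK, hKinv, hH, hE, hF⟩ := he
  exact ⟨intertwines_symm hK, intertwines_symm hKinv, intertwines_symm hH, intertwines_symm hE,
    intertwines_symm hF⟩

variable {ι : Type} {Vf : ι → Type} [∀ i, AddCommGroup (Vf i)] [∀ i, Module ℂ (Vf i)]
  {A : ∀ i, Ops (Vf i)}

lemma IsEquivariant.lsum [Fintype ι] [DecidableEq ι] {B : Ops W} {f : ∀ i, Vf i →ₗ[ℂ] W}
    (hf : ∀ i, IsEquivariant (A i) B (f i)) :
    IsEquivariant (piOps A) B (LinearMap.lsum ℂ Vf ℂ f) := by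
  refine ⟨?_, ?_, ?_, ?_, ?_⟩ <;> intro v <;>
    simp only [LinearMap.lsum_apply, LinearMap.sum_apply, LinearMap.comp_apply, map_sum] <;>
    refine Finset.sum_congr rfl fun i _ => ?_
  exacts [(hf i).1 _, (hf i).2.1 _, (hf i).2.2.1 _, (hf i).2.2.2.1 _, (hf i).2.2.2.2 _]

lemma piOps_E_pow_apply (n : ℕ) (x : ∀ i, Vf i) (i : ι) :
    ((piOps A).E ^ n) x i = ((A i).E ^ n) (x i) := by
  induction n generalizing x with
  | zero => rfl
  | succ n ih => simp only [pow_succ, Module.End.mul_apply, ih]; rfl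

end Equivariant

section Verma

variable {r : ℕ}

lemma vermaOps_E_apply (β : ℂ) (x : Fin r → ℂ) (i : Fin r) :
    (vermaOps r β).E x i =
      if h : (i : ℕ) + 1 < r then cE r β (i + 1) * x ⟨i + 1, h⟩ else 0 := by
  simp only [vermaOps, Matrix.mulVecLin_apply, Matrix.mulVec, dotProduct, Matrix.of_apply,
    ite_mul, zero_mul]
  split_ifs with h
  · rw [Finset.sum_eq_single ⟨i + 1, h⟩ (fun j _ hj => if_neg fun hji => hj (Fin.ext hji))
      (by simp), if_pos rfl]
  · exact Finset.sum_eq_zero fun j _ => if_neg (by omega)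

-- At `i = 0` the index `i - 1` is truncated to `0`, harmlessly since `cE r β 0 = 0`.
lemma vermaOps_E_single (β : ℂ) (i : Fin r) :
    (vermaOps r β).E (Pi.single i 1) = cE r β i • Pi.single ⟨i - 1, by omega⟩ 1 := by
  obtain ⟨i, hi⟩ := i
  ext j
  cases i with
  | zero => simp [vermaOps, Matrix.col_apply, cE_zero]
  | succ i => simp [vermaOps, Matrix.col_apply, Pi.single_apply, Fin.ext_iff, eq_comm]

lemma vermaOps_F_single (β : ℂ) (i : Fin r) :
    (vermaOps r β).F (Pi.single i 1) =
      if h : (i : ℕ) + 1 < r then Pi.single ⟨i + 1, h⟩ 1 else 0 := by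
  ext j
  split_ifs with h
  · simp [vermaOps, Matrix.col_apply, Pi.single_apply, Fin.ext_iff]
  · simp [vermaOps, Matrix.col_apply, show (j : ℕ) ≠ i + 1 by omega]

lemma vermaOps_E_pow_apply_eq_zero (β : ℂ) (x : Fin r → ℂ) {n : ℕ} {i : Fin r}
    (h : r ≤ i + n) : ((vermaOps r β).E ^ n) x i = 0 := by
  induction n generalizing i with
  | zero => omega
  | succ n ih =>
    rw [pow_succ', Module.End.mul_apply, vermaOps_E_apply]
    split_ifs with hi
    · rw [ih (by dsimp only; omega), mul_zero]
    · rfl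

lemma vermaOps_E_pow (r : ℕ) (β : ℂ) : (vermaOps r β).E ^ r = 0 := by
  refine LinearMap.ext fun x => funext fun i => ?_
  exact vermaOps_E_pow_apply_eq_zero β x (Nat.le_add_left r i)

variable [NeZero r]

lemma eq_single_zero_of_vermaOps_E_eq_zero {β : ℂ} (hβ : goodα r β) {x : Fin r → ℂ}
    (hx : (vermaOps r β).E x = 0) : x = Pi.single 0 (x 0) := by
  ext ⟨i, hi⟩
  cases i with
  | zero => simp
  | succ i =>
    have hcoord : cE r β (i + 1) * x ⟨i + 1, hi⟩ = 0 := by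
      simpa only [vermaOps_E_apply, hi, dite_true, Pi.zero_apply] using congrFun hx ⟨i, by omega⟩
    have hxi := (mul_eq_zero.1 hcoord).resolve_left (hβ.cE_ne_zero i.succ_pos hi)
    simp [hxi, Fin.ext_iff]

lemma eq_top_of_vermaOps_F_mem_of_single_zero_mem {β : ℂ} {p : Submodule ℂ (Fin r → ℂ)}
    (hF : ∀ v ∈ p, (vermaOps r β).F v ∈ p) (h0 : Pi.single 0 1 ∈ p) : p = ⊤ := by
  have single_mem (i : ℕ) (hi : i < r) : Pi.single ⟨i, hi⟩ 1 ∈ p := by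
    induction i with
    | zero => exact h0
    | succ i ih =>
      have := hF _ (ih (by omega))
      rwa [vermaOps_F_single, dif_pos hi] at this
  rw [eq_top_iff, ← (Pi.basisFun ℂ (Fin r)).span_eq, Submodule.span_le]
  rintro _ ⟨i, rfl⟩
  simpa using single_mem i i.2

lemma vermaOps_isSimple {β : ℂ} (hβ : goodα r β) : (vermaOps r β).IsSimple := by
  refine ⟨⟨Pi.single 0 1, by simp⟩, ?_⟩
  rintro p ⟨-, -, -, hE, hF⟩
  refine or_iff_not_imp_right.2 fun hp =>
    eq_bot_of_disjoint_ker_of_isNilpotent ⟨r, vermaOps_E_pow r β⟩ hE ?_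
  refine Submodule.disjoint_def.2 fun v hv hEv => ?_
  have hv0 := eq_single_zero_of_vermaOps_E_eq_zero hβ hEv
  suffices v 0 = 0 by rw [hv0, this, Pi.single_zero]
  by_contra hne
  refine hp (eq_top_of_vermaOps_F_mem_of_single_zero_mem hF ?_)
  rw [hv0] at hv
  simpa [← Pi.single_smul, hne] using p.smul_mem (v 0)⁻¹ hv

end Verma

section HighestWeight

/-- `v` is a highest weight vector of weight `μ`, that is, `H v = μ v` and `E v = 0`; the zero
vector is allowed. -/
structure IsHighestWeight (A : Ops V) (μ : ℂ) (v : V) : Prop where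
  H_apply : A.H v = μ • v
  E_apply : A.E v = 0

/-- The linear map `V_β → V` sending the basis vector `v_i` to `F ^ i w`. It does not depend on
`β`, which only enters the `Ū`-action on the source; it is `Ū`-linear when `w` is a highest weight
vector of weight `β + r - 1`. -/
def vermaMap (r : ℕ) (A : Ops V) (w : V) : (Fin r → ℂ) →ₗ[ℂ] V :=
  Fintype.linearCombination ℂ fun i : Fin r => (A.F ^ (i : ℕ)) w

variable {r : ℕ}

lemma vermaMap_single (A : Ops V) (w : V) (i : Fin r) (c : ℂ) :
    vermaMap r A w (Pi.single i c) = c • (A.F ^ (i : ℕ)) w :=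
  Fintype.linearCombination_apply_single ..

lemma IsHighestWeight.eigenspace_ne_bot {A : Ops V} {μ : ℂ} {v : V} (h : IsHighestWeight A μ v)
    (hv : v ≠ 0) : A.H.eigenspace μ ≠ ⊥ :=
  (Submodule.ne_bot_iff _).2 ⟨v, Module.End.mem_eigenspace_iff.2 h.H_apply, hv⟩

lemma Rep.Kinv_apply_of_K_apply (ρ : Rep r V) {c : ℂ} (hc : c ≠ 0) {v : V}
    (hv : ρ.K v = c • v) : ρ.Kinv v = c⁻¹ • v := by
  have h : c • ρ.Kinv v = v := by
    rw [← map_smul, ← hv, ← Module.End.mul_apply, ρ.rel_KinvK, Module.End.one_apply]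
  rw [eq_inv_smul_iff₀ hc, h]

lemma Rep.H_F_pow_apply (ρ : Rep r V) {μ : ℂ} {v : V} (hv : ρ.H v = μ • v) (i : ℕ) :
    ρ.H ((ρ.F ^ i) v) = (μ - 2 * i) • (ρ.F ^ i) v := by
  induction i with
  | zero => simpa using hv
  | succ i ih =>
    have hHF : ρ.H * ρ.F = ρ.F * ρ.H + (-2 : ℂ) • ρ.F := sub_eq_iff_eq_add'.1 ρ.rel_HF
    rw [pow_succ', Module.End.mul_apply, ← Module.End.mul_apply, hHF, LinearMap.add_apply,
      Module.End.mul_apply, ih, map_smul, LinearMap.smul_apply, ← add_smul]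
    congr 1
    push_cast
    ring

lemma Rep.H_mem_ker_E (ρ : Rep r V) : ∀ v ∈ LinearMap.ker ρ.E, ρ.H v ∈ LinearMap.ker ρ.E := by
  intro v hv
  rw [LinearMap.mem_ker] at hv ⊢
  simpa [hv] using LinearMap.congr_fun ρ.rel_HE v

lemma Rep.finrank_le_mul_finrank_ker_E (ρ : Rep r V) [FiniteDimensional ℂ V] :
    Module.finrank ℂ V ≤ r * Module.finrank ℂ (LinearMap.ker ρ.E) := by
  have h := finrank_ker_pow_le ρ.E r
  rwa [ρ.rel_Er, LinearMap.ker_zero, finrank_top] at h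

lemma Rep.exists_basis_ker_E_isHighestWeight (ρ : Rep r V) (hρ : IsWeight r ρ.toOps) :
    ∃ (b : Module.Basis (Fin (Module.finrank ℂ (LinearMap.ker ρ.E))) ℂ (LinearMap.ker ρ.E))
      (μ : Fin (Module.finrank ℂ (LinearMap.ker ρ.E)) → ℂ),
      ∀ j, IsHighestWeight ρ.toOps (μ j) (b j) := by
  have := hρ.finDim
  obtain ⟨b, μ, hμ⟩ := exists_basis_eigenvectors
    (Module.End.genEigenspace_restrict_eq_top ρ.H_mem_ker_E hρ.sup_eigenspaces)
  exact ⟨b, μ, fun j => ⟨congrArg Subtype.val (hμ j), (b j).2⟩⟩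

namespace IsHighestWeight

variable {ρ : Rep r V} {β : ℂ} {w : V}

lemma H_F_pow_apply (h : IsHighestWeight ρ.toOps (β + r - 1) w) (i : ℕ) :
    ρ.H ((ρ.F ^ i) w) = wt r β i • (ρ.F ^ i) w :=
  ρ.H_F_pow_apply h.H_apply i

lemma K_F_pow_apply (h : IsHighestWeight ρ.toOps (β + r - 1) w) (hρ : IsWeight r ρ.toOps)
    (i : ℕ) : ρ.K ((ρ.F ^ i) w) = qc r (wt r β i) • (ρ.F ^ i) w :=
  hρ.K_apply _ _ (Module.End.mem_eigenspace_iff.2 (h.H_F_pow_apply i))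

lemma Kinv_F_pow_apply (h : IsHighestWeight ρ.toOps (β + r - 1) w) (hρ : IsWeight r ρ.toOps)
    (i : ℕ) : ρ.Kinv ((ρ.F ^ i) w) = qc r (-wt r β i) • (ρ.F ^ i) w := by
  rw [qc_neg]
  exact ρ.Kinv_apply_of_K_apply (qc_ne_zero _ _) (h.K_F_pow_apply hρ i)

lemma E_F_pow_apply (h : IsHighestWeight ρ.toOps (β + r - 1) w) (hρ : IsWeight r ρ.toOps)
    (hr : 2 ≤ r) (i : ℕ) :
    ρ.E ((ρ.F ^ i) w) = cE r β i • (ρ.F ^ (i - 1)) w := by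
  induction i with
  | zero => simp [h.E_apply, cE_zero]
  | succ i ih =>
    have hEF : ρ.E * ρ.F = ρ.F * ρ.E + (qbrk r 1)⁻¹ • (ρ.K - ρ.Kinv) :=
      sub_eq_iff_eq_add'.1 ρ.rel_EF
    have hFE : ρ.F (ρ.E ((ρ.F ^ i) w)) = cE r β i • (ρ.F ^ i) w := by
      cases i with
      | zero => simp [h.E_apply, cE_zero]
      | succ i => rw [ih, map_smul, ← Module.End.mul_apply, Nat.add_sub_cancel, ← pow_succ']
    have hK : (ρ.K - ρ.Kinv) ((ρ.F ^ i) w) = qbrk r (wt r β i) • (ρ.F ^ i) w := by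
      rw [LinearMap.sub_apply, h.K_F_pow_apply hρ, h.Kinv_F_pow_apply hρ, ← sub_smul, qbrk]
    rw [pow_succ', Module.End.mul_apply, ← Module.End.mul_apply, hEF, LinearMap.add_apply,
      Module.End.mul_apply, hFE, LinearMap.smul_apply, hK, smul_smul, ← add_smul, cE_succ hr,
      Nat.add_sub_cancel]

lemma isEquivariant_vermaMap (h : IsHighestWeight ρ.toOps (β + r - 1) w) (hρ : IsWeight r ρ.toOps)
    (hr : 2 ≤ r) :
    IsEquivariant (vermaOps r β) ρ.toOps (vermaMap r ρ.toOps w) := by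
  have intertwines {S : Module.End ℂ (Fin r → ℂ)} {T : Module.End ℂ V}
      (hST : ∀ i : Fin r, vermaMap r ρ.toOps w (S (Pi.single i 1)) = T ((ρ.F ^ (i : ℕ)) w))
      (x : Fin r → ℂ) : vermaMap r ρ.toOps w (S x) = T (vermaMap r ρ.toOps w x) := by
    refine LinearMap.congr_fun (f := vermaMap r ρ.toOps w ∘ₗ S) (g := T ∘ₗ vermaMap r ρ.toOps w)
      ((Pi.basisFun ℂ (Fin r)).ext fun i => ?_) x
    simp [hST, vermaMap_single]
  have diagonal_intertwines {d : Fin r → ℂ} {T : Module.End ℂ V}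
      (hT : ∀ i : Fin r, T ((ρ.F ^ (i : ℕ)) w) = d i • (ρ.F ^ (i : ℕ)) w) :=
    intertwines (S := (Matrix.diagonal d).mulVecLin) (T := T) fun i => by
      simp [hT, vermaMap_single]
  refine ⟨diagonal_intertwines fun i => h.K_F_pow_apply hρ i,
    diagonal_intertwines fun i => h.Kinv_F_pow_apply hρ i,
    diagonal_intertwines fun i => h.H_F_pow_apply i,
    intertwines fun i => ?_, intertwines fun i => ?_⟩
  · rw [vermaOps_E_single, map_smul, vermaMap_single, one_smul, h.E_F_pow_apply hρ hr]
  · rw [vermaOps_F_single, ← Module.End.mul_apply, ← pow_succ']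
    split_ifs with hi
    · rw [vermaMap_single, one_smul]
    · rw [map_zero, show (i : ℕ) + 1 = r by omega, ρ.rel_Fr, LinearMap.zero_apply]

end IsHighestWeight

lemma injective_lsum_vermaMap [NeZero r] {ι : Type} [Fintype ι] [DecidableEq ι] {A : Ops V}
    {β : ι → ℂ} {w : ι → V} (hβ : ∀ j, goodα r (β j)) (hw : LinearIndependent ℂ w)
    (hequiv : ∀ j, IsEquivariant (vermaOps r (β j)) A (vermaMap r A (w j))) :
    Function.Injective (LinearMap.lsum ℂ (fun _ => Fin r → ℂ) ℂ fun j => vermaMap r A (w j)) := by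
  set Φ := LinearMap.lsum ℂ (fun _ => Fin r → ℂ) ℂ fun j => vermaMap r A (w j)
  have hnil : (piOps fun j => vermaOps r (β j)).E ^ r = 0 := by
    refine LinearMap.ext fun x => funext fun j => ?_
    simp [piOps_E_pow_apply, vermaOps_E_pow]
  obtain ⟨-, -, -, hE, -⟩ := IsEquivariant.lsum hequiv
  refine LinearMap.ker_eq_bot.1 (eq_bot_of_disjoint_ker_of_isNilpotent ⟨r, hnil⟩
    (fun v hv => ?_) (Submodule.disjoint_def.2 fun v hv hEv => ?_))
  · rw [LinearMap.mem_ker] at hv ⊢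
    rw [hE, hv, map_zero]
  · have hv0 (j : ι) : v j = Pi.single 0 (v j 0) :=
      eq_single_zero_of_vermaOps_E_eq_zero (hβ j) (congrFun hEv j)
    have hsum : ∑ j, v j 0 • w j = 0 := by
      calc ∑ j, v j 0 • w j = ∑ j, vermaMap r A (w j) (Pi.single 0 (v j 0)) := by
            simp [vermaMap_single]
        _ = Φ v := by simp [Φ, LinearMap.lsum_apply, ← hv0]
        _ = 0 := hv
    ext1 j
    rw [hv0, Fintype.linearIndependent_iff.1 hw _ hsum j, Pi.single_zero, Pi.zero_apply]

end HighestWeight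

lemma goodα_of_mem_coset {r : ℕ} {α β : ℂ} (hα : ¬∃ n : ℤ, α = n)
    (h : ∃ k : ℤ, β + r - 1 = α + 2 * k) : goodα r β := by
  obtain ⟨k, hk⟩ := h
  refine Or.inl fun ⟨n, hn⟩ => hα ⟨n + r - 1 - 2 * k, ?_⟩
  push_cast
  linear_combination hn - hk

theorem stmt7_general (r : ℕ) (hr : 2 ≤ r) (ρ : Rep r V) (hw : IsWeight r ρ.toOps)
    (hgood : ∀ (β : ℂ) (v : V), v ≠ 0 → IsHighestWeight ρ.toOps (β + r - 1) v → goodα r β) :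
    ∃ (m : ℕ) (β : Fin m → ℂ), (∀ i, (vermaOps r (β i)).IsSimple) ∧
      OpsIso ρ.toOps (piOps fun i : Fin m => vermaOps r (β i)) := by
  have : NeZero r := ⟨by omega⟩
  have := hw.finDim
  obtain ⟨b, μ, hμ⟩ := ρ.exists_basis_ker_E_isHighestWeight hw
  let w j : V := b j
  let β j : ℂ := μ j - r + 1
  have hβ j : IsHighestWeight ρ.toOps (β j + r - 1) (w j) := by
    rw [show β j + r - 1 = μ j by ring]
    exact hμ j
  have hwli : LinearIndependent ℂ w := b.linearIndependent.map' _ (Submodule.ker_subtype _)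
  have hβgood j : goodα r (β j) := hgood _ _ (hwli.ne_zero j) (hβ j)
  have hequiv j := (hβ j).isEquivariant_vermaMap hw hr
  have hinj := injective_lsum_vermaMap hβgood hwli hequiv
  have hdim : Module.finrank ℂ (Fin (Module.finrank ℂ (LinearMap.ker ρ.E)) → Fin r → ℂ) =
      Module.finrank ℂ V :=
    (LinearMap.finrank_le_finrank_of_injective hinj).antisymm
      (by simpa [Module.finrank_pi_fintype, mul_comm] using ρ.finrank_le_mul_finrank_ker_E)
  let e := LinearEquiv.ofInjectiveOfFinrankEq _ hinj hdim
  exact ⟨_, β, fun j => vermaOps_isSimple (hβgood j), e.symm,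
    IsEquivariant.symm (e := e) (IsEquivariant.lsum hequiv)⟩

/-- A weight module all of whose `H`-eigenvalues lie in `α + 2ℤ` with `α ∉ ℤ` is a
finite direct sum of simple Verma modules. -/
theorem stmt7 (r : ℕ) (hr : 2 ≤ r) (α : ℂ) (hα : ¬∃ n : ℤ, α = (n : ℂ))
    (ρ : Rep r V) (hw : IsWeight r ρ.toOps)
    (hcoset : ∀ μ : ℂ, Module.End.eigenspace ρ.H μ ≠ ⊥ → ∃ k : ℤ, μ = α + 2 * k) :
    ∃ (m : ℕ) (β : Fin m → ℂ), (∀ i, (vermaOps r (β i)).IsSimple) ∧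
      OpsIso ρ.toOps (piOps fun i : Fin m => vermaOps r (β i)) := by
  exact stmt7_general r hr ρ hw fun _ _ hv h =>
    goodα_of_mem_coset hα (hcoset _ (h.eigenspace_ne_bot hv))

end Unrolled
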